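/- arXiv:2008.03916 — 3 statements merged into one kernel-verified Lean document; each statement's English description precedes it below -/
import Mathlib

section
/- For all natural numbers n ≥ 0 and l ≥ 0, the (2l+1)-st power of the n-th balancing number satisfies the linearization identity B_n^{2l+1} = (1/2^{5l}) · ∑_{s=0}^{l} (-1)^s · C(2l+1, s) · B_{(2(l-s)+1)n}, where the identity is an equality of rational numbers (equivalently, 2^{5l} · B_n^{2l+1} = ∑_{s=0}^{l} (-1)^s · C(2l+1, s) · B_{(2(l-s)+1)n} as integers). -/
/-- The balancing numbers: B₀ = 0, B₁ = 1, Bₙ = 6·Bₙ₋₁ − Bₙ₋₂. -/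
def balancing : ℕ → ℤ
  | 0 => 0
  | 1 => 1
  | n + 2 => 6 * balancing (n + 1) - balancing n

/-!
The balancing numbers are the Lucas sequence `Uₙ(6, 1)`. If `x` and `y` are the roots of
`X² - P X + Q`, then `(x - y) Uₙ(P, Q) = xⁿ - yⁿ`. In the binomial expansion of
`(xⁿ - yⁿ) ^ (2l + 1)` the terms of index `s` and `2l + 1 - s` combine to a multiple of
`x ^ ((2(l - s) + 1)n) - y ^ ((2(l - s) + 1)n)`, so the linearization follows on cancelling one
factor `x - y`, whose square is `P² - 4Q`. This cancellation is legitimate for the generic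
coefficients `P, Q` of `ℤ[P, Q]`, and the resulting identity specializes to every commutative ring.
-/

theorem sum_range_two_mul_eq_sum_add_reflect {M : Type*} [AddCommMonoid M] (f : ℕ → M) (n : ℕ) :
    ∑ i ∈ Finset.range (2 * n), f i = ∑ i ∈ Finset.range n, (f i + f (2 * n - 1 - i)) := by
  rw [two_mul, Finset.sum_range_add, ← Finset.sum_range_reflect (fun i ↦ f (n + i)),
    ← Finset.sum_add_distrib]
  refine Finset.sum_congr rfl fun i hi ↦ ?_
  have i_lt : i < n := Finset.mem_range.mp hi
  congr 2
  omega

theorem sub_pow_two_mul_add_one {R : Type*} [CommRing R] (x y : R) (l : ℕ) :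
    (x - y) ^ (2 * l + 1) =
      ∑ s ∈ Finset.range (l + 1), (-1) ^ s * ((2 * l + 1).choose s : R) * (x * y) ^ s *
        (x ^ (2 * (l - s) + 1) - y ^ (2 * (l - s) + 1)) := by
  rw [sub_eq_neg_add, add_pow, show 2 * l + 1 + 1 = 2 * (l + 1) by ring,
    sum_range_two_mul_eq_sum_add_reflect]
  refine Finset.sum_congr rfl fun s hs ↦ ?_
  obtain ⟨k, rfl⟩ := Nat.exists_eq_add_of_le (Finset.mem_range_succ_iff.mp hs)
  have reflected_index : 2 * (s + k + 1) - 1 - s = s + (2 * k + 1) := by omega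
  have complement : 2 * (s + k) + 1 - s = s + (2 * k + 1) := by omega
  have reflected_complement : 2 * (s + k) + 1 - (s + (2 * k + 1)) = s := by omega
  have choose_reflect : (2 * (s + k) + 1).choose (s + (2 * k + 1)) = (2 * (s + k) + 1).choose s :=
    Nat.choose_symm_of_eq_add (by ring)
  have odd_neg_pow : (-y) ^ (2 * k + 1) = -y ^ (2 * k + 1) := Odd.neg_pow ⟨k, rfl⟩ y
  rw [reflected_index, complement, reflected_complement, choose_reflect, add_tsub_cancel_left,
    pow_add (-y), odd_neg_pow, neg_pow y s]
  ring

section LucasSequence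

variable {R : Type*} [CommRing R]

/-- The Lucas sequence of the first kind `Uₙ(P, Q)`, with characteristic polynomial
`X² - P X + Q`. -/
def lucasU (P Q : R) : ℕ → R
  | 0 => 0
  | 1 => 1
  | n + 2 => P * lucasU P Q (n + 1) - Q * lucasU P Q n

theorem map_lucasU {S : Type*} [CommRing S] (f : R →+* S) (P Q : R) (n : ℕ) :
    f (lucasU P Q n) = lucasU (f P) (f Q) n := by
  induction n using Nat.twoStepInduction with
  | zero => simp only [lucasU, map_zero]
  | one => simp only [lucasU, map_one]
  | more n ih₀ ih₁ => simp only [lucasU, map_sub, map_mul, ih₀, ih₁]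

theorem sub_mul_lucasU (x y : R) (n : ℕ) :
    (x - y) * lucasU (x + y) (x * y) n = x ^ n - y ^ n := by
  induction n using Nat.twoStepInduction with
  | zero => simp [lucasU]
  | one => simp [lucasU]
  | more n ih₀ ih₁ =>
    rw [lucasU]
    linear_combination (x + y) * ih₁ - x * y * ih₀

theorem sub_pow_mul_lucasU_pow_two_mul_add_one (x y : R) (n l : ℕ) :
    (x - y) ^ (2 * l + 1) * lucasU (x + y) (x * y) n ^ (2 * l + 1) =
      (x - y) * ∑ s ∈ Finset.range (l + 1), (-1) ^ s * ((2 * l + 1).choose s : R) *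
        (x * y) ^ (n * s) * lucasU (x + y) (x * y) ((2 * (l - s) + 1) * n) := by
  rw [← mul_pow, sub_mul_lucasU, sub_pow_two_mul_add_one, Finset.mul_sum]
  refine Finset.sum_congr rfl fun s _ ↦ ?_
  rw [← pow_mul, ← pow_mul, ← mul_pow, ← pow_mul, mul_comm n (2 * (l - s) + 1), ← sub_mul_lucasU]
  ring

open QuadraticAlgebra in
theorem lucasU_pow_two_mul_add_one_of_charZero [NoZeroDivisors R] [CharZero R] (P Q : R) (n l : ℕ) :
    (P ^ 2 - 4 * Q) ^ l * lucasU P Q n ^ (2 * l + 1) =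
      ∑ s ∈ Finset.range (l + 1), (-1) ^ s * ((2 * l + 1).choose s : R) * Q ^ (n * s) *
        lucasU P Q ((2 * (l - s) + 1) * n) := by
  let x : QuadraticAlgebra R (-Q) P := ω
  let φ := algebraMap R (QuadraticAlgebra R (-Q) P)
  have root_add : φ P = x + star x := by ext <;> simp [x, φ]
  have root_mul : φ Q = x * star x := by ext <;> simp [x, φ]
  have root_sub_sq : φ (P ^ 2 - 4 * Q) = (x - star x) ^ 2 := by
    rw [map_sub, map_mul, map_pow, map_ofNat, root_add, root_mul]
    ring
  have root_sub_mul_inj {a b : R} (h : (x - star x) * φ a = (x - star x) * φ b) : a = b := by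
    -- The coefficient of `ω` in `x - star x = 2 * ω - P` is `2`.
    have im_eq : 2 * a = 2 * b := by
      simpa [x, φ, one_add_one_eq_two] using congrArg QuadraticAlgebra.im h
    exact mul_left_cancel₀ two_ne_zero im_eq
  apply root_sub_mul_inj
  simp only [map_mul, map_sum, map_pow, map_neg, map_one, map_natCast, map_lucasU, root_sub_sq]
  rw [root_add, root_mul, ← sub_pow_mul_lucasU_pow_two_mul_add_one, ← mul_assoc, ← pow_mul,
    ← pow_succ']

theorem balancing_odd_power_linearization_general (P Q : R) (n l : ℕ) :
    (P ^ 2 - 4 * Q) ^ l * lucasU P Q n ^ (2 * l + 1) =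
      ∑ s ∈ Finset.range (l + 1), (-1) ^ s * ((2 * l + 1).choose s : R) * Q ^ (n * s) *
        lucasU P Q ((2 * (l - s) + 1) * n) := by
  obtain ⟨f, hP, hQ⟩ : ∃ f : MvPolynomial (Fin 2) ℤ →+* R,
      f (MvPolynomial.X 0) = P ∧ f (MvPolynomial.X 1) = Q :=
    ⟨MvPolynomial.eval₂Hom (Int.castRingHom R) ![P, Q], by simp, by simp⟩
  have generic := lucasU_pow_two_mul_add_one_of_charZero
    (MvPolynomial.X 0 : MvPolynomial (Fin 2) ℤ) (MvPolynomial.X 1) n l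
  simpa [map_lucasU, hP, hQ, map_ofNat f 4] using congrArg f generic

end LucasSequence

theorem balancing_eq_lucasU (n : ℕ) : balancing n = lucasU 6 1 n := by
  induction n using Nat.twoStepInduction with
  | zero => rfl
  | one => rfl
  | more n ih₀ ih₁ => rw [balancing, lucasU, ih₀, ih₁, one_mul]

/-- Odd-power linearization of balancing numbers:
`2^(5l) · Bₙ^(2l+1) = ∑_{s=0}^{l} (-1)^s C(2l+1, s) B_{(2(l−s)+1)n}`. -/
theorem balancing_odd_power_linearization (n l : ℕ) :
    (2 : ℤ) ^ (5 * l) * (balancing n) ^ (2 * l + 1) =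
      ∑ s ∈ Finset.range (l + 1),
        (-1 : ℤ) ^ s * (Nat.choose (2 * l + 1) s : ℤ) *
          balancing ((2 * (l - s) + 1) * n) := by
  simpa [balancing_eq_lucasU, pow_mul] using
    balancing_odd_power_linearization_general (6 : ℤ) 1 n l
end

section
/- For every integer m ≥ 1 and every integer k ≥ 2, the balancing numbers satisfy the three-term recurrence B_{km} − 6·B_m·B_{(k−1)m} + 2·B_{m−1}·B_{(k−1)m} + B_{(k−2)m} = 0; equivalently, B_{km} = (6·B_m − 2·B_{m−1})·B_{(k−1)m} − B_{(k−2)m}. -/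
/-!
The shift `σ` on solutions of `u (n + 2) = x • u (n + 1) - u n` satisfies `σ + σ⁻¹ = x`, so
`σᵐ + σ⁻ᵐ = Cₘ(x)`, where `Cₘ` is the rescaled Chebyshev polynomial of the first kind. At `x = 6`
the values of the Chebyshev polynomials of the second kind are the balancing numbers, which makes
`Cₘ(6)` equal to `6 Bₘ - 2 Bₘ₋₁`.
-/

open Polynomial

theorem add_eq_eval_chebyshevC_smul {R M : Type*} [CommRing R] [AddCommGroup M] [Module R M]
    {x : R} {u : ℕ → M} (hu : ∀ n, u (n + 2) = x • u (n + 1) - u n) (m n : ℕ) :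
    u (n + 2 * m) + u n = (Chebyshev.C R m).eval x • u (n + m) := by
  induction m using Nat.twoStepInduction generalizing n with
  | zero => simp [two_smul]
  | one => simp [hu n]
  | more m ih₀ ih₁ =>
    have hC : (Chebyshev.C R (m + 2 : ℕ)).eval x =
        x * (Chebyshev.C R (m + 1 : ℕ)).eval x - (Chebyshev.C R m).eval x := by
      simp [Chebyshev.C_add_two]
    have h₀ : u (n + 2 * m + 2) + u (n + 2) = (Chebyshev.C R m).eval x • u (n + (m + 2)) := by
      convert ih₀ (n + 2) using 3 <;> ring
    have h₁ : u (n + 2 * m + 3) + u (n + 1) =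
        (Chebyshev.C R (m + 1 : ℕ)).eval x • u (n + (m + 2)) := by
      convert ih₁ (n + 1) using 3 <;> ring
    calc u (n + 2 * (m + 2)) + u n
        = x • (u (n + 2 * m + 3) + u (n + 1)) - (u (n + 2 * m + 2) + u (n + 2)) := by
          rw [show n + 2 * (m + 2) = n + 2 * m + 2 + 2 by ring, hu (n + 2 * m + 2), hu n]
          module
      _ = (Chebyshev.C R (m + 2 : ℕ)).eval x • u (n + (m + 2)) := by
          rw [h₀, h₁, hC, sub_smul, mul_smul]

theorem balancing_eq_eval_chebyshevS (n : ℕ) :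
    balancing n = (Chebyshev.S ℤ (n - 1)).eval 6 := by
  induction n using Nat.twoStepInduction with
  | zero => simp [balancing]
  | one => simp [balancing]
  | more n ih₀ ih₁ =>
    have hn : ((n + 2 : ℕ) : ℤ) - 1 = (n - 1) + 2 := by lia
    rw [balancing, ih₀, ih₁, hn, Chebyshev.S_add_two]
    simp

theorem eval_chebyshevC_eq_balancing {m : ℕ} (hm : 1 ≤ m) :
    (Chebyshev.C ℤ m).eval 6 = 6 * balancing m - 2 * balancing (m - 1) := by
  have hC : Chebyshev.C ℤ m = X * Chebyshev.S ℤ (m - 1) - 2 * Chebyshev.S ℤ (m - 2) := by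
    rw [Chebyshev.C_eq_S_sub_X_mul_S, Chebyshev.S_eq ℤ m]
    ring
  have hm' : ((m - 1 : ℕ) : ℤ) - 1 = m - 2 := by lia
  rw [balancing_eq_eval_chebyshevS m, balancing_eq_eval_chebyshevS (m - 1), hm', hC]
  simp

theorem balancing_spaced_recurrence_general {M : Type*} [AddCommGroup M] {u : ℕ → M}
    (hu : ∀ n, u (n + 2) = (6 : ℤ) • u (n + 1) - u n) {m : ℕ} (hm : 1 ≤ m) (n : ℕ) :
    u (n + 2 * m) = (6 * balancing m - 2 * balancing (m - 1)) • u (n + m) - u n := by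
  rw [← eval_chebyshevC_eq_balancing hm, ← add_eq_eval_chebyshevC_smul hu, add_sub_cancel_right]

/-- Three-term recurrence for equally spaced balancing numbers:
`B_{km} − 6BₘB_{(k−1)m} + 2Bₘ₋₁B_{(k−1)m} + B_{(k−2)m} = 0` for m ≥ 1, k ≥ 2. -/
theorem balancing_spaced_recurrence (m k : ℕ) (hm : 1 ≤ m) (hk : 2 ≤ k) :
    balancing (k * m) - 6 * balancing m * balancing ((k - 1) * m)
      + 2 * balancing (m - 1) * balancing ((k - 1) * m)
      + balancing ((k - 2) * m) = 0 := by
  obtain ⟨j, rfl⟩ := Nat.exists_eq_add_of_le' hk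
  have h := balancing_spaced_recurrence_general (u := balancing) (fun _ ↦ rfl) hm (j * m)
  rw [← add_mul, ← add_one_mul, smul_eq_mul] at h
  simp only [Nat.add_sub_cancel, show j + 2 - 1 = j + 1 from rfl]
  linear_combination h
end

section
/- For all integers n ≥ 0 and m ≥ 1, the partial sum of equally spaced balancing numbers satisfies ∑_{k=0}^{n} B_{km} = (B_{m(n+1)} − B_{mn} − B_m) / (−2 + 6·B_m − 2·B_{m−1}); equivalently, as an identity of integers, (−2 + 6·B_m − 2·B_{m−1}) · ∑_{k=0}^{n} B_{km} = B_{m(n+1)} − B_{mn} − B_m. -/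
/-! The balancing numbers are values of rescaled Chebyshev polynomials of the second kind,
`Bₙ = Sₙ₋₁(6)`; those of the first kind take the values `Cₘ(6) = 6Bₘ - 2Bₘ₋₁`. The product formula
`Cₘ Sₖ = Sₖ₊ₘ + Sₖ₋ₘ` says that the subsequence `uₖ = Sₖₘ₋₁` again satisfies a recurrence
`uₖ₊₂ = c uₖ₊₁ - uₖ`, now with `c = Cₘ`. For such a recurrence `(c - 2) uₖ₊₁` is the second
difference of `u`, so its sum telescopes. -/

theorem sub_two_mul_sum_range_of_recurrence {R : Type*} [Ring R] {c : R} {u : ℕ → R}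
    (hu : ∀ k, u (k + 2) = c * u (k + 1) - u k) (n : ℕ) :
    (c - 2) * ∑ k ∈ Finset.range n, u (k + 1) = (u (n + 1) - u n) - (u 1 - u 0) := by
  have second_difference (k : ℕ) :
      (c - 2) * u (k + 1) = (u (k + 1 + 1) - u (k + 1)) - (u (k + 1) - u k) := by
    rw [hu, sub_mul, two_mul]
    abel
  simp_rw [Finset.mul_sum, second_difference]
  exact Finset.sum_range_sub (fun k ↦ u (k + 1) - u k) n

section Chebyshev

open Polynomial.Chebyshev (C S)

variable (R : Type*) [CommRing R]

theorem chebyshev_C_mul_S (m k : ℤ) : C R m * S R k = S R (k + m) + S R (k - m) := by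
  induction m using Polynomial.Chebyshev.induct' with
  | zero => simp [two_mul]
  | one => simp [Polynomial.Chebyshev.S_add_one]
  | add_two m ih₁ ih₀ =>
    have C_rec := Polynomial.Chebyshev.C_add_two R m
    have S_rec_up := Polynomial.Chebyshev.S_add_two R (k + m)
    have S_rec_down := Polynomial.Chebyshev.S_sub_two R (k - m)
    linear_combination (norm := ring_nf)
      S R k * C_rec - S_rec_up - S_rec_down + Polynomial.X * ih₁ - ih₀
  | neg m ih => simpa [add_comm, sub_eq_add_neg] using ih

theorem chebyshev_C_sub_two_mul_sum_S (m : ℤ) (n : ℕ) :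
    (C R m - 2) * ∑ k ∈ Finset.range (n + 1), S R (k * m - 1) =
      S R (m * (n + 1) - 1) - S R (m * n - 1) - S R (m - 1) := by
  have recurrence (k : ℕ) : S R ((k + 2 : ℕ) * m - 1) =
      C R m * S R ((k + 1 : ℕ) * m - 1) - S R (k * m - 1) := by
    rw [chebyshev_C_mul_S]
    push_cast
    ring_nf
  have telescoped :=
    sub_two_mul_sum_range_of_recurrence (u := fun k : ℕ ↦ S R (k * m - 1)) recurrence n
  rw [Finset.sum_range_succ']
  simpa [mul_comm m] using telescoped

theorem balancing_eq_chebyshev_S_eval_six (n : ℕ) : balancing n = (S ℤ (n - 1)).eval 6 := by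
  induction n using Nat.twoStepInduction with
  | zero => simp [balancing]
  | one => simp [balancing]
  | more n ih₀ ih₁ =>
    have index : ((n + 2 : ℕ) : ℤ) - 1 = n + 1 := by push_cast; ring
    rw [balancing, ih₀, ih₁, index, Polynomial.Chebyshev.S_add_one]
    simp

theorem chebyshev_C_eval_six (n : ℕ) :
    (C ℤ (n + 1)).eval 6 = 6 * balancing (n + 1) - 2 * balancing n := by
  rw [Polynomial.Chebyshev.C_eq_S_sub_X_mul_S, Polynomial.Chebyshev.S_add_one,
    balancing_eq_chebyshev_S_eval_six, balancing_eq_chebyshev_S_eval_six]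
  simp only [Polynomial.eval_sub, Polynomial.eval_mul, Polynomial.eval_ofNat, Polynomial.eval_X,
    Nat.cast_add, Nat.cast_one, add_sub_cancel_right]
  ring

end Chebyshev

/-- Summation formula for equally spaced balancing numbers, in cleared form:
`(−2 + 6Bₘ − 2Bₘ₋₁) · ∑_{k=0}^{n} B_{km} = B_{m(n+1)} − B_{mn} − Bₘ`. -/
theorem balancing_spaced_sum (n m : ℕ) (hm : 1 ≤ m) :
    (-2 + 6 * balancing m - 2 * balancing (m - 1)) *
        ∑ k ∈ Finset.range (n + 1), balancing (k * m) =
      balancing (m * (n + 1)) - balancing (m * n) - balancing m := by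
  obtain ⟨p, rfl⟩ := Nat.exists_eq_add_of_le' hm
  have sum_at_six := congrArg (Polynomial.eval 6) (chebyshev_C_sub_two_mul_sum_S ℤ (p + 1) n)
  rw [Polynomial.eval_mul, Polynomial.eval_sub, chebyshev_C_eval_six] at sum_at_six
  rw [Nat.add_sub_cancel, neg_add_eq_sub, sub_right_comm]
  simpa [balancing_eq_chebyshev_S_eval_six, Polynomial.eval_finsetSum] using sum_at_six
end
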